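/- arXiv:2008.11912 — 8 statements merged into one kernel-verified Lean document; each statement's English description precedes it below -/
import Mathlib

section
/- Let C be a small category, I and J types, and X : I → C, Y : J → C families of objects. Then there is a bijection between morphisms ∐_{i : I} yoneda.obj (X i) ⟶ ∐_{j : J} yoneda.obj (Y j) in the category of Type-valued presheaves on C and the set ∏_{i : I} Σ_{j : J} Hom_C(X i, Y j); i.e. a map of coproducts of representables is precisely the choice, for each index i, of an index j together with a morphism X i ⟶ Y j. -/
open CategoryTheory CategoryTheory.Limits

universe u

/-!
A map out of a coproduct is a family of maps out of its summands, and by the Yoneda lemma a map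
`yoneda.obj X ⟶ P` is an element of `P` at `X`. Coproducts of presheaves are computed pointwise,
so an element of `∐ⱼ yoneda.obj (Y j)` at `X` lies in exactly one summand, where it is a morphism
`X ⟶ Y j`.
-/

universe v w₁ w₂

theorem sigma_desc_bijective {D : Type*} [Category* D] {I : Type*} (F : I → D) [HasCoproduct F]
    (Z : D) : Function.Bijective (Sigma.desc : (∀ i, F i ⟶ Z) → (∐ F ⟶ Z)) := by
  refine Function.bijective_iff_has_inverse.mpr
    ⟨fun f i => Sigma.ι F i ≫ f, fun g => ?_, fun f => ?_⟩
  · funext i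
    exact Sigma.ι_desc g i
  · exact Sigma.hom_ext _ _ fun i => Sigma.ι_desc _ i

theorem sigma_ι_app_bijective {D : Type*} [Category* D] {J : Type w₂} [Small.{v} J]
    (F : J → D ⥤ Type v) (d : D) :
    Function.Bijective fun x : Σ j, (F j).obj d => (Sigma.ι F x.1).app d x.2 :=
  (Cofan.nonempty_isColimit_iff_bijective_fromSigma _).mp
    ⟨isColimitOfHasCoproductOfPreservesColimit ((evaluation D (Type v)).obj d) F⟩

theorem yoneda_map_comp_sigma_ι_bijective {C : Type u} [Category.{v} C] {J : Type w₂}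
    [Small.{v} J] (X : C) (Y : J → C) :
    Function.Bijective fun s : Σ j, (X ⟶ Y j) =>
      yoneda.map s.2 ≫ Sigma.ι (fun j => yoneda.obj (Y j)) s.1 := by
  rw [← yonedaEquiv.comp_bijective]
  simpa only [Function.comp_def, yonedaEquiv_comp, yonedaEquiv_yoneda_map] using
    sigma_ι_app_bijective (fun j => yoneda.obj (Y j)) (Opposite.op X)

theorem hom_coproduct_yoneda_equiv_general {C : Type u} [Category.{v} C]
    {I : Type w₁} {J : Type w₂} [Small.{v} I] [Small.{v} J] (X : I → C) (Y : J → C) :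
    Function.Bijective fun s : ∀ i : I, Σ j : J, (X i ⟶ Y j) =>
      Sigma.desc fun i => yoneda.map (s i).2 ≫ Sigma.ι (fun j => yoneda.obj (Y j)) (s i).1 :=
  (sigma_desc_bijective (fun i => yoneda.obj (X i)) _).comp
    (.piMap fun i => yoneda_map_comp_sigma_ι_bijective (X i) Y)

/-- Morphisms between coproducts of representable presheaves: a map
`∐ᵢ yoneda (X i) ⟶ ∐ⱼ yoneda (Y j)` is exactly the choice, for each `i`, of an index
`j` together with a morphism `X i ⟶ Y j`. -/
theorem hom_coproduct_yoneda_equiv {C : Type u} [SmallCategory C]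
    {I J : Type u} (X : I → C) (Y : J → C) :
    Nonempty
      (((∐ fun i : I => yoneda.obj (X i)) ⟶ ∐ fun j : J => yoneda.obj (Y j)) ≃
        ∀ i : I, Σ j : J, (X i ⟶ Y j)) :=
  ⟨(Equiv.ofBijective _ (hom_coproduct_yoneda_equiv_general X Y)).symm⟩
end

section
/- The local left lifting property is stable under composition: let O be a frame, I a partial order, and U : I → O a monotone map. If f : K → L and g : L → M are monotone maps of partial orders such that both f and g have the local left lifting property against (I, U), then the composite g ∘ f : K → M has the local left lifting property against (I, U). -/
/-- A monotone map `f : K → L` has the *local left lifting property* against a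
diagram `U : I → O` of elements of a frame `O` if for every `σ : K →o I` the meet
`⨅ k, U (σ k)` is covered by the meets `⨅ l, U (τ l)` over all lifts `τ : L →o I`
of `σ` along `f`. -/
def HasLocalLLP {O : Type*} [Order.Frame O] {I : Type*} [PartialOrder I] (U : I →o O)
    {K L : Type*} [PartialOrder K] [PartialOrder L] (f : K →o L) : Prop :=
  ∀ σ : K →o I,
    (⨅ k : K, U (σ k)) ≤ ⨆ τ : {τ : L →o I // τ.comp f = σ}, ⨅ l : L, U (τ.1 l)

theorem le_iSup_fiber_comp {O A B C : Type*} [CompleteLattice O] {p : B → A} {q : C → B}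
    {a : A → O} {b : B → O} {c : C → O}
    (hp : ∀ x, a x ≤ ⨆ y : {y // p y = x}, b y)
    (hq : ∀ y, b y ≤ ⨆ z : {z // q z = y}, c z) (x : A) :
    a x ≤ ⨆ z : {z // p (q z) = x}, c z :=
  calc
    a x ≤ ⨆ y : {y // p y = x}, b y := hp x
    _ ≤ ⨆ y : {y // p y = x}, ⨆ z : {z // q z = y}, c z := iSup_mono fun y => hq y
    _ ≤ ⨆ z : {z // p (q z) = x}, c z :=
      iSup_le fun y => iSup_le fun z =>
        le_iSup_of_le ⟨z, (congrArg p z.2).trans y.2⟩ le_rfl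

theorem hasLocalLLP_comp_general {O I K L M : Type*} [CompleteLattice O] [Preorder I]
    [Preorder K] [Preorder L] [Preorder M] (U : I → O) (f : K →o L) (g : L →o M)
    (hf : ∀ σ : K →o I, (⨅ k, U (σ k)) ≤ ⨆ τ : {τ : L →o I // τ.comp f = σ}, ⨅ l, U (τ.1 l))
    (hg : ∀ τ : L →o I, (⨅ l, U (τ l)) ≤ ⨆ ρ : {ρ : M →o I // ρ.comp g = τ}, ⨅ m, U (ρ.1 m))
    (σ : K →o I) :
    (⨅ k, U (σ k)) ≤ ⨆ ρ : {ρ : M →o I // ρ.comp (g.comp f) = σ}, ⨅ m, U (ρ.1 m) :=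
  le_iSup_fiber_comp (p := fun τ : L →o I => τ.comp f) (q := fun ρ : M →o I => ρ.comp g)
    (a := fun σ => ⨅ k, U (σ k)) (b := fun τ => ⨅ l, U (τ l)) (c := fun ρ => ⨅ m, U (ρ m))
    hf hg σ

/-- The local left lifting property is stable under composition. -/
theorem hasLocalLLP_comp {O : Type*} [Order.Frame O] {I : Type*} [PartialOrder I]
    (U : I →o O) {K L M : Type*} [PartialOrder K] [PartialOrder L] [PartialOrder M]
    (f : K →o L) (g : L →o M)
    (hf : HasLocalLLP U f) (hg : HasLocalLLP U g) :
    HasLocalLLP U (g.comp f) :=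
  hasLocalLLP_comp_general U f g hf hg
end

section
/- The local left lifting property is stable under retracts: let O be a frame, I a partial order, and U : I → O a monotone map. Let f : K → L and f' : K' → L' be monotone maps of partial orders, and suppose f' is a retract of f in the arrow category; that is, there are monotone maps i : K' → K, r : K → K', j : L' → L, s : L → L' with f ∘ i = j ∘ f', f' ∘ r = s ∘ f, r ∘ i = id, and s ∘ j = id. If f has the local left lifting property against (I, U), then so does f'. -/
/-!
A retract diagram identifies `f ∘ i` with `j ∘ f'`. The lifting property passes from `f` to `f ∘ i`
because `σ` extends along the split monomorphism `i` to `σ ∘ r`, which takes no new values, and from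
`j ∘ f'` to `f'` because a lift along `j ∘ f'` restricts along `j`, which only enlarges its meet.
-/

namespace HasLocalLLP

variable {O I K L M : Type*} [Order.Frame O] [PartialOrder I] [PartialOrder K] [PartialOrder L]
  [PartialOrder M] {U : I →o O}

theorem of_comp {g : L →o M} {f : K →o L} (h : HasLocalLLP U (g.comp f)) : HasLocalLLP U f :=
  fun σ => (h σ).trans <| iSup_mono' fun τ =>
    ⟨⟨τ.1.comp g, τ.2⟩, le_iInf_comp (fun m => U (τ.1 m)) g⟩

theorem comp_of_comp_eq_id {f : L →o M} (hf : HasLocalLLP U f) {i : K →o L} {r : L →o K}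
    (hri : r.comp i = OrderHom.id) : HasLocalLLP U (f.comp i) := by
  intro σ
  have lift_comp (τ : M →o I) (hτ : τ.comp f = σ.comp r) : τ.comp (f.comp i) = σ :=
    calc
      τ.comp (f.comp i) = (τ.comp f).comp i := rfl
      _ = σ.comp (r.comp i) := by rw [hτ]; rfl
      _ = σ := by rw [hri, OrderHom.comp_id]
  calc
    ⨅ k, U (σ k) ≤ ⨅ l, U (σ.comp r l) := le_iInf_comp (fun k => U (σ k)) r
    _ ≤ ⨆ τ : {τ : M →o I // τ.comp f = σ.comp r}, ⨅ m, U (τ.1 m) := hf (σ.comp r)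
    _ ≤ ⨆ τ : {τ : M →o I // τ.comp (f.comp i) = σ}, ⨅ m, U (τ.1 m) :=
      iSup_mono' fun τ => ⟨⟨τ.1, lift_comp τ.1 τ.2⟩, le_rfl⟩

end HasLocalLLP

theorem hasLocalLLP_retract_general {O : Type*} [Order.Frame O] {I : Type*} [PartialOrder I]
    (U : I →o O) {K L K' L' : Type*} [PartialOrder K] [PartialOrder L]
    [PartialOrder K'] [PartialOrder L']
    (f : K →o L) (f' : K' →o L')
    (i : K' →o K) (r : K →o K') (j : L' →o L)
    (hsq : f.comp i = j.comp f') (hri : r.comp i = OrderHom.id)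
    (hf : HasLocalLLP U f) :
    HasLocalLLP U f' := by
  have hfi : HasLocalLLP U (f.comp i) := hf.comp_of_comp_eq_id hri
  rw [hsq] at hfi
  exact hfi.of_comp

/-- The local left lifting property is stable under retracts in the arrow category. -/
theorem hasLocalLLP_retract {O : Type*} [Order.Frame O] {I : Type*} [PartialOrder I]
    (U : I →o O) {K L K' L' : Type*} [PartialOrder K] [PartialOrder L]
    [PartialOrder K'] [PartialOrder L']
    (f : K →o L) (f' : K' →o L')
    (i : K' →o K) (r : K →o K') (j : L' →o L) (s : L →o L')
    (hsq₁ : f.comp i = j.comp f') (hsq₂ : f'.comp r = s.comp f)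
    (hri : r.comp i = OrderHom.id) (hsj : s.comp j = OrderHom.id)
    (hf : HasLocalLLP U f) :
    HasLocalLLP U f' :=
  hasLocalLLP_retract_general U f f' i r j hsq₁ hri hf
end

section
/- Let O be a frame, I a partial order, and U : I → O a monotone map. Let g : K → L and h : L → L' be monotone maps of partial orders. If the composite h ∘ g : K → L' has the local left lifting property against (I, U), then g : K → L has the local left lifting property against (I, U). -/
section

variable {O I K L L' : Type*} [CompleteLattice O] [Preorder I] [Preorder K] [Preorder L]
  [Preorder L']

/-- The extent to which `σ` lifts along `f`: the right-hand side of the inequality defining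
`HasLocalLLP`, for `O` a complete lattice and `U` an arbitrary function. -/
def liftExtent (U : I → O) (f : K →o L) (σ : K →o I) : O :=
  ⨆ τ : {τ : L →o I // τ.comp f = σ}, ⨅ l : L, U (τ.1 l)

lemma liftExtent_comp_le (U : I → O) (g : K →o L) (h : L →o L') (σ : K →o I) :
    liftExtent U (h.comp g) σ ≤ liftExtent U g σ := by
  refine iSup_mono' fun ⟨τ, hτ⟩ => ?_
  have comp_h_lifts : (τ.comp h).comp g = σ := hτ
  exact ⟨⟨τ.comp h, comp_h_lifts⟩, le_iInf_comp (fun l' => U (τ l')) h⟩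

theorem hasLocalLLP_of_comp_general (U : I → O) (g : K →o L) (h : L →o L') (σ : K →o I)
    (hgh : (⨅ k : K, U (σ k)) ≤ liftExtent U (h.comp g) σ) :
    (⨅ k : K, U (σ k)) ≤ liftExtent U g σ :=
  hgh.trans (liftExtent_comp_le U g h σ)

end

/-- If a composite `h ∘ g` has the local left lifting property against `(I, U)`,
then so does the first factor `g`. -/
theorem hasLocalLLP_of_comp {O : Type*} [Order.Frame O] {I : Type*} [PartialOrder I]
    (U : I →o O) {K L L' : Type*} [PartialOrder K] [PartialOrder L] [PartialOrder L']
    (g : K →o L) (h : L →o L')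
    (hgh : HasLocalLLP U (h.comp g)) :
    HasLocalLLP U g :=
  fun σ => hasLocalLLP_of_comp_general U g h σ (hgh σ)
end

section
/- Local lifting against cones reduces to a 0-coinitial subset: let O be a frame, I a partial order, and U : I → O a monotone map. Let K be a finite partial order and K₀ ⊆ K a 0-coinitial subset with the induced order. If the canonical coercion K₀ → WithBot K₀ has the local left lifting property against (I, U), then the canonical coercion K → WithBot K has the local left lifting property against (I, U). Equivalently, unfolding the definitions: if for every monotone σ₀ : K₀ → I one has ⨅_{k ∈ K₀} U (σ₀ k) ≤ ⨆_{i : ∀ k ∈ K₀, i ≤ σ₀ k} U i, then for every monotone σ : K → I one has ⨅_{k : K} U (σ k) ≤ ⨆_{i : ∀ k : K, i ≤ σ k} U i. -/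
/-- A subset `K₀` of a partial order `K` is *0-coinitial* if every element of `K` is
bounded below by an element of `K₀`. -/
def ZeroCoinitial {K : Type*} [PartialOrder K] (K₀ : Set K) : Prop :=
  ∀ k : K, ∃ k₀ ∈ K₀, k₀ ≤ k

/-- The canonical coercion of a partial order into its left cone `WithBot K`,
as a monotone map. -/
def coneCoe (K : Type*) [PartialOrder K] : K →o WithBot K :=
  ⟨WithBot.some, fun _ _ h => WithBot.coe_le_coe.mpr h⟩

/-! A lift of `σ : K →o I` to `WithBot K` amounts to a lower bound of `σ`, and it contributes `U i`
to the covering, `i` being that bound. Restricting `σ` to a 0-coinitial subset enlarges the meet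
being covered but adds no lower bounds, since every value of `σ` lies above one on the subset. -/

open Set

theorem iInf_eq_apply_bot_of_monotone {L O : Type*} [Preorder L] [OrderBot L]
    [CompleteLattice O] {f : L → O} (hf : Monotone f) : ⨅ l, f l = f ⊥ :=
  le_antisymm (iInf_le f ⊥) (le_iInf fun _ => hf bot_le)

/-- The extension of `σ : K →o I` to the left cone of `K` that sends the cone point to a given
lower bound `i` of `σ`. -/
def coneExtension {K I : Type*} [Preorder K] [Preorder I] (σ : K →o I)
    (i : lowerBounds (range σ)) : WithBot K →o I where
  toFun := WithBot.recBotCoe (C := fun _ => I) i.1 σ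
  monotone' := WithBot.monotone_iff.2 ⟨σ.monotone, forall_mem_range.1 i.2⟩

section ConeLift

variable {K I : Type*} [PartialOrder K] [Preorder I]

theorem apply_bot_mem_lowerBounds_of_comp_coneCoe_eq {σ : K →o I} {τ : WithBot K →o I}
    (hτ : τ.comp (coneCoe K) = σ) : τ ⊥ ∈ lowerBounds (range σ) := by
  rintro _ ⟨k, rfl⟩
  rw [← hτ]
  exact τ.monotone bot_le

/-- Lifts of `σ` along the coercion into the left cone correspond to lower bounds of `σ`, a lift
being sent to its value at the cone point. -/
def coneLiftEquiv (σ : K →o I) :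
    {τ : WithBot K →o I // τ.comp (coneCoe K) = σ} ≃ lowerBounds (range σ) where
  toFun τ := ⟨τ.1 ⊥, apply_bot_mem_lowerBounds_of_comp_coneCoe_eq τ.2⟩
  invFun i := ⟨coneExtension σ i, rfl⟩
  left_inv := by
    rintro ⟨τ, rfl⟩
    ext l
    cases l <;> rfl
  right_inv _ := rfl

theorem iSup_iInf_coneLift_eq {O : Type*} [CompleteLattice O] (U : I →o O) (σ : K →o I) :
    ⨆ τ : {τ : WithBot K →o I // τ.comp (coneCoe K) = σ}, ⨅ l, U (τ.1 l) =
      ⨆ i : lowerBounds (range σ), U i :=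
  (coneLiftEquiv σ).iSup_congr fun τ =>
    (iInf_eq_apply_bot_of_monotone (U.monotone.comp τ.1.monotone)).symm

end ConeLift

theorem hasLocalLLP_coneCoe_iff {O I K : Type*} [Order.Frame O] [PartialOrder I] [PartialOrder K]
    {U : I →o O} :
    HasLocalLLP U (coneCoe K) ↔
      ∀ σ : K →o I, ⨅ k, U (σ k) ≤ ⨆ i : lowerBounds (range σ), U i :=
  forall_congr' fun σ => by rw [iSup_iInf_coneLift_eq]

theorem ZeroCoinitial.lowerBounds_image_subset {K I : Type*} [PartialOrder K] [Preorder I]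
    {K₀ : Set K} (hK₀ : ZeroCoinitial K₀) {σ : K → I} (hσ : Monotone σ) :
    lowerBounds (σ '' K₀) ⊆ lowerBounds (range σ) := by
  have univ_coinitialFor : IsCoinitialFor univ K₀ := fun k _ => hK₀ k
  rw [← image_univ]
  exact lowerBounds_mono_of_isCoinitialFor (univ_coinitialFor.image_of_monotone hσ)

theorem hasLocalLLP_cone_of_zeroCoinitial_general {O I K₀ K : Type*} [Order.Frame O]
    [PartialOrder I] [PartialOrder K₀] [PartialOrder K] {U : I →o O} (j : K₀ →o K)
    (hj : ZeroCoinitial (range j)) (h₀ : HasLocalLLP U (coneCoe K₀)) :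
    HasLocalLLP U (coneCoe K) := by
  refine hasLocalLLP_coneCoe_iff.2 fun σ => ?_
  have bounds_subset : lowerBounds (range (σ.comp j)) ⊆ lowerBounds (range σ) :=
    (range_comp σ j).symm ▸ hj.lowerBounds_image_subset σ.monotone
  calc
    ⨅ k, U (σ k) ≤ ⨅ k₀, U (σ.comp j k₀) := le_iInf_comp (fun k => U (σ k)) j
    _ ≤ ⨆ i : lowerBounds (range (σ.comp j)), U i := hasLocalLLP_coneCoe_iff.1 h₀ (σ.comp j)
    _ ≤ ⨆ i : lowerBounds (range σ), U i :=
      iSup_comp_le (fun i : lowerBounds (range σ) => U i) (inclusion bounds_subset)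

/-- Local lifting against cones reduces to a 0-coinitial subset: if the inclusion of
a 0-coinitial subset `K₀` of a finite poset `K` into its left cone has the local
left lifting property against `(I, U)`, then so does `K → WithBot K`. -/
theorem hasLocalLLP_cone_of_zeroCoinitial {O : Type*} [Order.Frame O]
    {I : Type*} [PartialOrder I] (U : I →o O)
    {K : Type*} [PartialOrder K] [Fintype K] (K₀ : Set K) (hK₀ : ZeroCoinitial K₀)
    (h₀ : HasLocalLLP U (coneCoe K₀)) :
    HasLocalLLP U (coneCoe K) :=
  hasLocalLLP_cone_of_zeroCoinitial_general (OrderHom.Subtype.val (· ∈ K₀))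
    (by rwa [OrderHom.Subtype.val_coe, Subtype.range_coe]) h₀
end

section
/- Atlases via lifting properties (poset part): let O be a frame, I a partial order, and U : I → O a monotone map. The following are equivalent: (a) the coercions K → WithBot K have the local left lifting property against (I, U) for K the empty partial order and for K a two-element partial order with the discrete (trivial) order; (b) for every finite type K equipped with the discrete partial order, the coercion K → WithBot K has the local left lifting property against (I, U); (c) for every natural number n, the inclusion of the partial order of nonempty proper subsets of Fin (n+1) into the partial order of all nonempty subsets of Fin (n+1), both ordered by reverse inclusion (S ≤ T iff T ⊆ S), has the local left lifting property against (I, U). -/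
/-- A type-synonym equipping a type with the discrete (trivial) partial order. -/
def Discrete' (α : Type*) : Type _ := α

instance (α : Type*) : PartialOrder (Discrete' α) where
  le a b := a = b
  le_refl _ := rfl
  le_trans _ _ _ h h' := Eq.trans h h'
  le_antisymm _ _ h _ := h

/-- The poset of nonempty subsets of `Fin (n+1)`, ordered by *reverse* inclusion
(the poset of nondegenerate simplices of the `n`-simplex). -/
abbrev NonemptySubsets (n : ℕ) : Type :=
  ({S : Set (Fin (n + 1)) // S.Nonempty})ᵒᵈ

/-- The poset of nonempty proper subsets of `Fin (n+1)`, ordered by *reverse*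
inclusion (the poset of nondegenerate simplices of the boundary of the
`n`-simplex). -/
abbrev NonemptyProperSubsets (n : ℕ) : Type :=
  ({S : Set (Fin (n + 1)) // S.Nonempty ∧ S ≠ Set.univ})ᵒᵈ

/-- The inclusion of the poset of nonempty proper subsets of `Fin (n+1)` into the
poset of all nonempty subsets, both with the reverse-inclusion order. -/
noncomputable def boundaryInclusion (n : ℕ) : NonemptyProperSubsets n →o NonemptySubsets n :=
  ⟨fun S => OrderDual.toDual ⟨(OrderDual.ofDual S).1, (OrderDual.ofDual S).2.1⟩,
    fun _ _ h => h⟩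

/-!
A left cone `f : K → L` adds to `K` only a bottom element, so extending a monotone `σ : K → I` along
`f` amounts to choosing a lower bound of the range of `σ`, and the meet of `U` over the extension is
the value of `U` at that lower bound. Hence `f` has the local l.l.p. iff, for every such `σ`, the
meet of `U` over the range of `σ` is covered by the values of `U` at lower bounds of that range.
The empty poset tests this for `∅`, and a disconnected poset, such as the boundary of the
`1`-simplex, tests it for every pair `{i, j}`. Distributivity of meets over joins then extends it to
all finite subsets of `I` by induction.
-/

open Set

section Atlas

variable {O I : Type*} [CompleteLattice O]

/-- The meet of `U` over `s` is covered by the values of `U` at the lower bounds of `s`: the local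
lifting property of a left cone, expressed for a single subset of `I`. -/
def CoveredByLowerBounds [LE I] (U : I → O) (s : Set I) : Prop :=
  ⨅ i ∈ s, U i ≤ ⨆ i ∈ lowerBounds s, U i

/-- `U` is an atlas: its values cover `⊤`, and each binary meet `U i ⊓ U j` is covered by the values
of `U` at the common lower bounds of `i` and `j`. -/
structure IsAtlas [LE I] (U : I → O) : Prop where
  top_le_iSup : ⊤ ≤ ⨆ i, U i
  inf_le_iSup : ∀ i j, U i ⊓ U j ≤ ⨆ (k : I) (_ : k ≤ i ∧ k ≤ j), U k

theorem coveredByLowerBounds_empty_iff [Preorder I] {U : I → O} :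
    CoveredByLowerBounds U ∅ ↔ ⊤ ≤ ⨆ i, U i := by
  simp [CoveredByLowerBounds]

theorem coveredByLowerBounds_pair_iff [Preorder I] {U : I → O} {i j : I} :
    CoveredByLowerBounds U {i, j} ↔ U i ⊓ U j ≤ ⨆ (k : I) (_ : k ≤ i ∧ k ≤ j), U k := by
  rw [CoveredByLowerBounds, iInf_pair, lowerBounds_insert, lowerBounds_singleton]
  rfl

end Atlas

theorem IsAtlas.coveredByLowerBounds {O I : Type*} [Order.Frame O] [Preorder I] {U : I → O}
    (hU : IsAtlas U) {s : Set I} (hs : s.Finite) : CoveredByLowerBounds U s := by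
  induction s, hs using Set.Finite.induction_on with
  | empty => exact coveredByLowerBounds_empty_iff.2 hU.top_le_iSup
  | @insert a s _ _ ih =>
    calc ⨅ i ∈ insert a s, U i
      _ = U a ⊓ ⨅ i ∈ s, U i := iInf_insert
      _ ≤ U a ⊓ ⨆ j ∈ lowerBounds s, U j := inf_le_inf_left _ ih
      _ = ⨆ j ∈ lowerBounds s, U a ⊓ U j := inf_iSup₂_eq ..
      _ ≤ ⨆ k ∈ lowerBounds (insert a s), U k := iSup₂_le fun j hj =>
        (hU.inf_le_iSup a j).trans <| biSup_mono fun k hk => by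
          rw [lowerBounds_insert]
          exact ⟨hk.1, fun i hi => hk.2.trans (hj hi)⟩

/-- `f` exhibits `L` as the left cone on `K`, with cone point `b`. It covers both the left cone
`WithBot K` itself and the simplex as the left cone on its boundary. -/
structure IsLeftCone {K L : Type*} [Preorder K] [Preorder L] (f : K →o L) (b : L) : Prop where
  le_of_map_le : ∀ ⦃k k' : K⦄, f k ≤ f k' → k ≤ k'
  isBot : IsBot b
  range_eq : range f = {b}ᶜ

namespace IsLeftCone

section Preorder

variable {K L : Type*} [Preorder K] [Preorder L] {f : K →o L} {b : L}

theorem notMem_range (hf : IsLeftCone f b) : b ∉ range f := by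
  simp [hf.range_eq]

theorem eq_or_exists_map_eq (hf : IsLeftCone f b) (l : L) : l = b ∨ ∃ k, f k = l := by
  rw [← mem_range, hf.range_eq]
  exact em _

theorem apply_mem_lowerBounds {I : Type*} [Preorder I] (hf : IsLeftCone f b) (τ : L →o I) :
    τ b ∈ lowerBounds (range (τ.comp f)) :=
  forall_mem_range.2 fun k => τ.monotone (hf.isBot (f k))

end Preorder

theorem injective {K L : Type*} [PartialOrder K] [Preorder L] {f : K →o L} {b : L}
    (hf : IsLeftCone f b) : Function.Injective f := fun _ _ h =>
  le_antisymm (hf.le_of_map_le h.le) (hf.le_of_map_le h.ge)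

variable {K L : Type*} [PartialOrder K] [PartialOrder L] {f : K →o L} {b : L}

theorem exists_extension {I : Type*} [Preorder I] (hf : IsLeftCone f b) {σ : K →o I} {i : I}
    (hi : i ∈ lowerBounds (range σ)) : ∃ τ : L →o I, τ.comp f = σ ∧ τ b = i := by
  let g : L → I := Function.extend f σ fun _ => i
  have g_map (k : K) : g (f k) = σ k := hf.injective.extend_apply _ _ k
  have g_point : g b = i := Function.extend_apply' _ _ _ hf.notMem_range
  have g_mono : Monotone g := by
    intro l l' hl
    obtain rfl | ⟨k', rfl⟩ := hf.eq_or_exists_map_eq l'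
    · rw [le_antisymm hl (hf.isBot l)]
    obtain rfl | ⟨k, rfl⟩ := hf.eq_or_exists_map_eq l
    · rw [g_point, g_map]
      exact hi (mem_range_self k')
    · rw [g_map, g_map]
      exact σ.monotone (hf.le_of_map_le hl)
  exact ⟨⟨g, g_mono⟩, OrderHom.ext _ _ (funext g_map), g_point⟩

variable {O I : Type*} [Order.Frame O] [PartialOrder I] {U : I →o O}

theorem hasLocalLLP_iff (hf : IsLeftCone f b) :
    HasLocalLLP U f ↔ ∀ σ : K →o I, CoveredByLowerBounds U (range σ) := by
  refine forall_congr' fun σ => ?_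
  have iInf_extension (τ : L →o I) : ⨅ l, U (τ l) = U (τ b) :=
    le_antisymm (iInf_le _ b) (le_iInf fun l => U.monotone (τ.monotone (hf.isBot l)))
  have iSup_extension : ⨆ τ : {τ : L →o I // τ.comp f = σ}, U (τ.1 b) =
      ⨆ i ∈ lowerBounds (range σ), U i := by
    apply le_antisymm
    · refine iSup_le ?_
      rintro ⟨τ, rfl⟩
      exact le_iSup₂_of_le (τ b) (hf.apply_mem_lowerBounds τ) le_rfl
    · refine iSup₂_le fun i hi => ?_
      obtain ⟨τ, hτ, rfl⟩ := hf.exists_extension hi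
      exact le_iSup_of_le ⟨τ, hτ⟩ le_rfl
  simp only [CoveredByLowerBounds, iInf_range, iInf_extension, iSup_extension]

theorem top_le_iSup_of_hasLocalLLP [IsEmpty K] (hf : IsLeftCone f b) (h : HasLocalLLP U f) :
    ⊤ ≤ ⨆ i, U i := by
  let σ : K →o I := ⟨isEmptyElim, fun k => isEmptyElim k⟩
  have hσ : range σ = ∅ := range_eq_empty _
  exact coveredByLowerBounds_empty_iff.1 (hσ ▸ hf.hasLocalLLP_iff.1 h σ)

-- The surjection `p` says that `K` is disconnected, so `i` and `j` can be chosen independently.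
theorem inf_le_iSup_of_hasLocalLLP (hf : IsLeftCone f b)
    {p : K →o Discrete' Bool} (hp : Function.Surjective p) (h : HasLocalLLP U f) (i j : I) :
    U i ⊓ U j ≤ ⨆ (k : I) (_ : k ≤ i ∧ k ≤ j), U k := by
  let choice : Discrete' Bool →o I :=
    ⟨fun x : Bool => cond x j i, fun _ _ h => (congrArg (cond · j i) h).le⟩
  have hσ : range (choice.comp p) = {i, j} :=
    (hp.range_comp choice).trans (Bool.range_eq _)
  exact coveredByLowerBounds_pair_iff.1 (hσ ▸ hf.hasLocalLLP_iff.1 h (choice.comp p))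

end IsLeftCone

theorem IsAtlas.hasLocalLLP {O I K L : Type*} [Order.Frame O] [PartialOrder I] [PartialOrder K]
    [PartialOrder L] [Finite K] {U : I →o O} {f : K →o L} {b : L} (hU : IsAtlas U)
    (hf : IsLeftCone f b) : HasLocalLLP U f :=
  hf.hasLocalLLP_iff.2 fun σ => hU.coveredByLowerBounds (finite_range σ)

theorem isLeftCone_coneCoe (K : Type*) [PartialOrder K] : IsLeftCone (coneCoe K) ⊥ where
  le_of_map_le _ _ := WithBot.coe_le_coe.1
  isBot := isBot_bot
  range_eq := ext fun _ => WithBot.ne_bot_iff_exists.symm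

theorem isLeftCone_boundaryInclusion (n : ℕ) :
    IsLeftCone (boundaryInclusion n) (OrderDual.toDual ⟨univ, univ_nonempty⟩) where
  le_of_map_le _ _ := id
  isBot S := subset_univ (OrderDual.ofDual S).1
  range_eq := by
    ext S
    constructor
    · rintro ⟨T, rfl⟩ hT
      exact (OrderDual.ofDual T).2.2 (congrArg Subtype.val hT)
    · intro hS
      exact ⟨OrderDual.toDual ⟨_, (OrderDual.ofDual S).2, fun h => hS (Subtype.ext h)⟩, rfl⟩

namespace NonemptyProperSubsets

instance isEmpty_zero : IsEmpty (NonemptyProperSubsets 0) where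
  false S := (OrderDual.ofDual S).2.2 <|
    Subsingleton.eq_univ_of_nonempty (α := Fin 1) (OrderDual.ofDual S).2.1

theorem zero_mem_iff_one_notMem (S : NonemptyProperSubsets 1) :
    (0 : Fin 2) ∈ (OrderDual.ofDual S).1 ↔ (1 : Fin 2) ∉ (OrderDual.ofDual S).1 := by
  have hne := Fin.exists_fin_two.1 (OrderDual.ofDual S).2.1
  have hproper := mt eq_univ_of_forall (OrderDual.ofDual S).2.2
  rw [Fin.forall_fin_two] at hproper
  tauto

theorem exists_surjective_discrete_bool :
    ∃ p : NonemptyProperSubsets 1 →o Discrete' Bool, Function.Surjective p := by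
  classical
  let p (S : NonemptyProperSubsets 1) : Bool := decide ((0 : Fin 2) ∈ (OrderDual.ofDual S).1)
  have p_mono (S T : NonemptyProperSubsets 1) (hTS : S ≤ T) : p S = p T := by
    refine decide_eq_decide.2 ⟨fun h => ?_, fun h => hTS h⟩
    rw [zero_mem_iff_one_notMem] at h ⊢
    exact fun h' => h (hTS h')
  let vertex (x : Fin 2) : NonemptyProperSubsets 1 :=
    OrderDual.toDual ⟨{x}, singleton_nonempty x, singleton_ne_univ x⟩
  refine ⟨⟨p, p_mono⟩, ?_⟩
  rintro (_ | _)
  · exact ⟨vertex 1, decide_eq_false (by simp [vertex])⟩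
  · exact ⟨vertex 0, decide_eq_true (mem_singleton _)⟩

end NonemptyProperSubsets

/-- Atlases via lifting properties (poset part): for a monotone map `U : I → O`
into a frame, the following are equivalent:
(a) the cone inclusions `K → WithBot K` for `K` empty and for `K` a two-element
    discrete poset have the local l.l.p. against `(I, U)`;
(b) the cone inclusion `K → WithBot K` has the local l.l.p. against `(I, U)` for
    every finite discrete poset `K`;
(c) for every `n`, the inclusion of the poset of nonempty proper subsets of
    `Fin (n+1)` into that of all nonempty subsets (reverse inclusion order) has
    the local l.l.p. against `(I, U)`. -/
theorem atlas_tfae {O : Type*} [Order.Frame O] {I : Type*} [PartialOrder I]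
    (U : I →o O) :
    List.TFAE
      [HasLocalLLP U (coneCoe (Discrete' Empty)) ∧
          HasLocalLLP U (coneCoe (Discrete' Bool)),
        ∀ (K : Type) (_ : Finite K), HasLocalLLP U (coneCoe (Discrete' K)),
        ∀ n : ℕ, HasLocalLLP U (boundaryInclusion n)] := by
  tfae_have 1 → 3 := fun ⟨h_empty, h_bool⟩ n =>
    have : IsEmpty (Discrete' Empty) := inferInstanceAs (IsEmpty Empty)
    have : Finite (NonemptyProperSubsets n) := Subtype.finite
    have atlas : IsAtlas U :=
      ⟨(isLeftCone_coneCoe _).top_le_iSup_of_hasLocalLLP h_empty,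
        (isLeftCone_coneCoe _).inf_le_iSup_of_hasLocalLLP (p := .id) Function.surjective_id h_bool⟩
    atlas.hasLocalLLP (isLeftCone_boundaryInclusion n)
  tfae_have 3 → 2 := fun h K (hK : Finite (Discrete' K)) =>
    have ⟨_, hp⟩ := NonemptyProperSubsets.exists_surjective_discrete_bool
    have atlas : IsAtlas U :=
      ⟨(isLeftCone_boundaryInclusion 0).top_le_iSup_of_hasLocalLLP (h 0),
        (isLeftCone_boundaryInclusion 1).inf_le_iSup_of_hasLocalLLP hp (h 1)⟩
    atlas.hasLocalLLP (isLeftCone_coneCoe _)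
  tfae_have 2 → 1 := fun h => ⟨h Empty inferInstance, h Bool inferInstance⟩
  tfae_finish
end

section
/- Let p : C ⥤ D be a functor between categories that is a Grothendieck fibration (Functor.IsFibered in Mathlib: every morphism of D into the image of an object of C admits a strongly cartesian lift). Then the induced functor on arrow categories p.mapArrow : Arrow C ⥤ Arrow D is also a Grothendieck fibration. -/
open CategoryTheory

/-!
A lift of a square is strongly cartesian as soon as both of its components are: the factorizations
of the two components form a square again, since both ways around it lift the same morphism and
agree after composition with the right component. To lift a square, lift both of its components and
obtain the arrow between their sources by factoring through the lift of the right component.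
-/

section

variable {C D : Type*} [Category C] [Category D] (p : C ⥤ D)
  {R S : Arrow D} {a b : Arrow C} (F : R ⟶ S) (φ : a ⟶ b)

variable {p} in
theorem mapArrow_obj_eq_of_isHomLift [p.IsHomLift R.hom a.hom] : p.mapArrow.obj a = R :=
  Arrow.ext (IsHomLift.domain_eq p R.hom a.hom) (IsHomLift.codomain_eq p R.hom a.hom)
    (IsHomLift.fac' p R.hom a.hom)

theorem mapArrow_isHomLift_iff :
    p.mapArrow.IsHomLift F φ ↔
      (p.IsHomLift F.left φ.left ∧ p.IsHomLift F.right φ.right) ∧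
        p.IsHomLift R.hom a.hom ∧ p.IsHomLift S.hom b.hom := by
  constructor
  · rintro ⟨⟩
    exact ⟨⟨.map φ.left, .map φ.right⟩, .map _, .map _⟩
  · rintro ⟨⟨_, _⟩, _, _⟩
    refine IsHomLift.of_fac' p.mapArrow F φ mapArrow_obj_eq_of_isHomLift
      mapArrow_obj_eq_of_isHomLift (Arrow.hom_ext _ _ ?_ ?_)
    · simp only [Arrow.comp_left, Arrow.eqToHom_left]
      exact IsHomLift.fac' p F.left φ.left
    · simp only [Arrow.comp_right, Arrow.eqToHom_right]
      exact IsHomLift.fac' p F.right φ.right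

variable {φ} in
theorem comm_of_isStronglyCartesian_right {T : D} (f : R.right ⟶ T)
    [p.IsStronglyCartesian f φ.right] [p.IsHomLift R.hom a.hom]
    {R' : Arrow D} {a' : Arrow C} [p.IsHomLift R'.hom a'.hom] (G : R' ⟶ R)
    {χl : a'.left ⟶ a.left} {χr : a'.right ⟶ a.right}
    [p.IsHomLift G.left χl] [p.IsHomLift G.right χr] {ψ : a' ⟶ b}
    (hl : χl ≫ φ.left = ψ.left) (hr : χr ≫ φ.right = ψ.right) :
    χl ≫ a.hom = a'.hom ≫ χr := by
  have : p.IsHomLift (G.left ≫ R.hom) (a'.hom ≫ χr) := Arrow.w G ▸ inferInstance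
  apply Functor.IsStronglyCartesian.ext p f φ.right (G.left ≫ R.hom)
  calc
    (χl ≫ a.hom) ≫ φ.right = (χl ≫ φ.left) ≫ b.hom := by simp
    _ = a'.hom ≫ ψ.right := by rw [hl, Arrow.w]
    _ = (a'.hom ≫ χr) ≫ φ.right := by rw [Category.assoc, hr]

theorem mapArrow_isStronglyCartesian_s14 [p.mapArrow.IsHomLift F φ]
    (hφl : p.IsStronglyCartesian F.left φ.left) (hφr : p.IsStronglyCartesian F.right φ.right) :
    p.mapArrow.IsStronglyCartesian F φ where
  universal_property' {a'} G ψ hψ := by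
    obtain ⟨-, ha, -⟩ := (mapArrow_isHomLift_iff p F φ).1 inferInstance
    obtain ⟨⟨hψl, hψr⟩, ha', -⟩ := (mapArrow_isHomLift_iff p (G ≫ F) ψ).1 hψ
    obtain ⟨χl, ⟨hχl, hl⟩, uniq_l⟩ := Functor.IsStronglyCartesian.universal_property p
      F.left φ.left G.left (G ≫ F).left rfl ψ.left
    obtain ⟨χr, ⟨hχr, hr⟩, uniq_r⟩ := Functor.IsStronglyCartesian.universal_property p
      F.right φ.right G.right (G ≫ F).right rfl ψ.right
    have w : χl ≫ a.hom = a'.hom ≫ χr :=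
      comm_of_isStronglyCartesian_right p F.right G hl hr
    refine ⟨Arrow.homMk χl χr w, ⟨?_, Arrow.hom_ext _ _ hl hr⟩, ?_⟩
    · exact (mapArrow_isHomLift_iff p G _).2 ⟨⟨hχl, hχr⟩, ha', ha⟩
    · rintro χ ⟨hχ, rfl⟩
      obtain ⟨⟨hl', hr'⟩, -⟩ := (mapArrow_isHomLift_iff p G χ).1 hχ
      exact Arrow.hom_ext _ _ (uniq_l _ ⟨hl', rfl⟩) (uniq_r _ ⟨hr', rfl⟩)

theorem exists_mapArrow_isHomLift [p.IsHomLift S.hom b.hom] {x y : C}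
    (φl : x ⟶ b.left) (φr : y ⟶ b.right) [p.IsHomLift F.left φl]
    [p.IsStronglyCartesian F.right φr] :
    ∃ (u : x ⟶ y) (w : φl ≫ b.hom = u ≫ φr),
      p.mapArrow.IsHomLift F (Arrow.homMk φl φr w : Arrow.mk u ⟶ b) := by
  obtain ⟨u, ⟨hu, w⟩, -⟩ := Functor.IsStronglyCartesian.universal_property p F.right φr
    R.hom (F.left ≫ S.hom) (Arrow.w F) (φl ≫ b.hom)
  exact ⟨u, w.symm, (mapArrow_isHomLift_iff p F _).2
    ⟨⟨‹p.IsHomLift F.left φl›, ‹p.IsStronglyCartesian F.right φr›.toIsHomLift⟩, hu, ‹_›⟩⟩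

end

/-- If `p : C ⥤ D` is a Grothendieck fibration, then the induced functor on arrow
categories `Arrow C ⥤ Arrow D` is also a Grothendieck fibration. -/
theorem mapArrow_isFibered {C : Type*} {D : Type*} [Category C] [Category D]
    (p : C ⥤ D) [p.IsFibered] : p.mapArrow.IsFibered := by
  refine .of_exists_isStronglyCartesian fun a R F ↦ ?_
  obtain ⟨x, φl, _⟩ := IsPreFibered.exists_isCartesian p (S := (p.mapArrow.obj a).left) rfl F.left
  obtain ⟨y, φr, _⟩ := IsPreFibered.exists_isCartesian p (S := (p.mapArrow.obj a).right) rfl F.right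
  have hφl : p.IsStronglyCartesian F.left φl := inferInstance
  have hφr : p.IsStronglyCartesian F.right φr := inferInstance
  have : p.IsHomLift (p.mapArrow.obj a).hom a.hom := .map a.hom
  obtain ⟨u, w, _⟩ := exists_mapArrow_isHomLift p F φl φr
  exact ⟨Arrow.mk u, Arrow.homMk φl φr w, mapArrow_isStronglyCartesian_s14 p F _ hφl hφr⟩
end

section
/- Let p : C ⥤ D be a functor between categories and let φ : A ⟶ B be a morphism in the arrow category Arrow C, with components φ.left : A.left ⟶ B.left and φ.right : A.right ⟶ B.right. If φ.left is strongly cartesian with respect to p (over p.map φ.left) and φ.right is strongly cartesian with respect to p (over p.map φ.right), then φ is strongly cartesian with respect to p.mapArrow : Arrow C ⥤ Arrow D (over p.mapArrow.map φ). -/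
open CategoryTheory

/-!
Lift each component separately. The two component lifts form a morphism of arrows because the two
sides of the required square lie over the same morphism of the base and agree after composition
with `φ.right`, hence are equal by the uniqueness part of cartesianness of `φ.right`.
-/

section

variable {C D : Type*} [Category C] [Category D] (p : C ⥤ D)

theorem isHomLift_iff_map_eq {a b : C} (f : p.obj a ⟶ p.obj b) (φ : a ⟶ b) :
    p.IsHomLift f φ ↔ p.map φ = f :=
  ⟨fun _ ↦ (IsHomLift.eq_of_isHomLift p f φ).symm, fun h ↦ h ▸ .map φ⟩

theorem isStronglyCartesian_map_iff {a b : C} (φ : a ⟶ b) :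
    p.IsStronglyCartesian (p.map φ) φ ↔
      ∀ ⦃a' : C⦄ (g : p.obj a' ⟶ p.obj a) (ψ : a' ⟶ b), p.map ψ = g ≫ p.map φ →
        ∃! χ : a' ⟶ a, p.map χ = g ∧ χ ≫ φ = ψ := by
  simp only [← isHomLift_iff_map_eq]
  exact ⟨fun h _ g ψ _ ↦ h.universal_property' g ψ,
    fun h ↦ { universal_property' := fun g ψ hψ ↦ h g ψ hψ }⟩

theorem eq_of_map_eq_of_comp_eq {R S : D} {a b c : C} (f : R ⟶ S) (φ : a ⟶ b)
    [p.IsStronglyCartesian f φ] {χ χ' : c ⟶ a} (hmap : p.map χ = p.map χ')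
    (hcomp : χ ≫ φ = χ' ≫ φ) : χ = χ' := by
  subst_hom_lift p f φ
  have : p.IsHomLift (p.map χ) χ' := (isHomLift_iff_map_eq p _ _).2 hmap.symm
  exact Functor.IsStronglyCartesian.ext p (p.map φ) φ (p.map χ) hcomp

theorem comp_hom_eq_hom_comp_of_isStronglyCartesian_right {R S : D} {X A B : Arrow C}
    (f : R ⟶ S) (φ : A ⟶ B) [p.IsStronglyCartesian f φ.right] (ψ : X ⟶ B)
    {l : X.left ⟶ A.left} {r : X.right ⟶ A.right}
    (hmap : p.map l ≫ p.map A.hom = p.map X.hom ≫ p.map r)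
    (hl : l ≫ φ.left = ψ.left) (hr : r ≫ φ.right = ψ.right) :
    l ≫ A.hom = X.hom ≫ r := by
  apply eq_of_map_eq_of_comp_eq p f φ.right
  · simpa only [p.map_comp] using hmap
  · calc
      (l ≫ A.hom) ≫ φ.right = l ≫ φ.left ≫ B.hom := by rw [Category.assoc, Arrow.w φ]
      _ = ψ.left ≫ B.hom := by rw [← Category.assoc, hl]
      _ = X.hom ≫ ψ.right := Arrow.w ψ
      _ = (X.hom ≫ r) ≫ φ.right := by rw [Category.assoc, hr]

end

/-- A morphism in the arrow category whose two components are strongly cartesian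
(with respect to `p`) is strongly cartesian with respect to the induced functor
`p.mapArrow : Arrow C ⥤ Arrow D` on arrow categories. -/
theorem mapArrow_isStronglyCartesian {C : Type*} {D : Type*} [Category C] [Category D]
    (p : C ⥤ D) {A B : Arrow C} (φ : A ⟶ B)
    (hleft : p.IsStronglyCartesian (p.map φ.left) φ.left)
    (hright : p.IsStronglyCartesian (p.map φ.right) φ.right) :
    p.mapArrow.IsStronglyCartesian (p.mapArrow.map φ) φ := by
  refine (isStronglyCartesian_map_iff p.mapArrow φ).2 fun X g ψ hψ ↦ ?_
  obtain ⟨l, ⟨map_l, fac_l⟩, uniq_l⟩ :=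
    (isStronglyCartesian_map_iff p φ.left).1 hleft g.left ψ.left (congrArg (·.left) hψ)
  obtain ⟨r, ⟨map_r, fac_r⟩, uniq_r⟩ :=
    (isStronglyCartesian_map_iff p φ.right).1 hright g.right ψ.right (congrArg (·.right) hψ)
  have base_comm : p.map l ≫ p.map A.hom = p.map X.hom ≫ p.map r := by
    rw [map_l, map_r]
    exact Arrow.w g
  have comm : l ≫ A.hom = X.hom ≫ r :=
    comp_hom_eq_hom_comp_of_isStronglyCartesian_right p (p.map φ.right) φ ψ base_comm fac_l fac_r
  refine ⟨Arrow.homMk l r comm,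
    ⟨Arrow.hom_ext _ _ map_l map_r, Arrow.hom_ext _ _ fac_l fac_r⟩, ?_⟩
  rintro χ ⟨rfl, rfl⟩
  exact Arrow.hom_ext _ _ (uniq_l χ.left ⟨rfl, rfl⟩) (uniq_r χ.right ⟨rfl, rfl⟩)
end
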